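/- Let p be a prime number and let d ≥ 0 be an integer. For every tuple (a_1, …, a_d) of elements of the finite field 𝔽_p, there exist p-adic integers x_1, …, x_d ∈ ℤ_p that are algebraically independent over ℚ (as elements of the ℚ-algebra ℚ_p) and satisfy x_i ≡ a_i (mod p) for all i, i.e. the image of each x_i under the residue map ℤ_p → 𝔽_p is a_i. -/

import Mathlib

/-!
The cardinality of a domain extending a ring is at most the largest of that of the base ring, the
transcendence degree and `ℵ₀`. As `ℚ_p` has at least `𝔠` elements, it contains a family of `𝔠`
elements algebraically independent over `ℚ`. Adding a rational number to each member keeps such a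
family independent, and since `ℚ` is dense in `ℚ_p`, these translations can move each member into
any prescribed nonempty open set, in particular into the residue disc of `a_i`.
-/

open Cardinal Polynomial

universe u v w

section Algebra

variable {R : Type u} {A : Type v} [CommRing R] [CommRing A] [Algebra R A]

theorem transcendental_X_add_C (c : R) : Transcendental R (X + C c : R[X]) := by
  nontriviality R
  exact Polynomial.transcendental _ (by simp) (by simp)

theorem algebraicIndependent_add_algebraMap {ι : Type w} {x : ι → A}
    (hx : AlgebraicIndependent R x) (c : ι → R) :
    AlgebraicIndependent R fun i => x i + algebraMap R A (c i) := by
  simpa using hx.polynomial_aeval_of_transcendental fun i => transcendental_X_add_C (c i)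

theorem exists_algebraicIndependent_mem_of_isOpen [TopologicalSpace A] [ContinuousAdd A]
    (hR : DenseRange (algebraMap R A)) {ι : Type w} {x : ι → A} (hx : AlgebraicIndependent R x)
    {U : ι → Set A} (hU : ∀ i, IsOpen (U i)) (hne : ∀ i, (U i).Nonempty) :
    ∃ y : ι → A, AlgebraicIndependent R y ∧ ∀ i, y i ∈ U i := by
  have exists_translation (i : ι) : ∃ c : R, x i + algebraMap R A c ∈ U i := by
    obtain ⟨u, hu⟩ := hne i
    exact hR.exists_mem_open ((hU i).preimage (continuous_const_add (x i)))
      ⟨u - x i, by simpa using hu⟩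
  choose c hc using exists_translation
  exact ⟨_, algebraicIndependent_add_algebraMap hx c, hc⟩

theorem exists_algebraicIndependent_of_lift_mk_le_trdeg [IsDomain A] [FaithfulSMul R A]
    {ι : Type w} (hι : lift.{v} #ι ≤ lift.{w} (Algebra.trdeg R A)) :
    ∃ x : ι → A, AlgebraicIndependent R x := by
  have : Nontrivial R := (algebraMap R A).domain_nontrivial
  obtain ⟨s, hs⟩ := exists_isTranscendenceBasis R A
  rw [← hs.cardinalMk_eq_trdeg, lift_mk_le'] at hι
  obtain ⟨f⟩ := hι
  exact ⟨_, hs.1.comp f f.injective⟩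

theorem lift_mk_le_max_trdeg [IsDomain A] [FaithfulSMul R A] :
    lift.{u} #A ≤ lift.{v} #R ⊔ lift.{u} (Algebra.trdeg R A) ⊔ ℵ₀ := by
  have : Nontrivial R := (algebraMap R A).domain_nontrivial
  obtain ⟨s, hs⟩ := exists_isTranscendenceBasis R A
  let S := Algebra.adjoin R (Set.range ((↑) : s → A))
  have : Algebra.IsAlgebraic S A := hs.isAlgebraic
  have mk_S : lift.{u} #S = #(MvPolynomial s R) := by
    rw [← lift_umax, ← lift_mk_eq'.mpr ⟨hs.1.aevalEquiv.toEquiv⟩, lift_id'.{v}]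
  calc lift.{u} #A ≤ lift.{u} (#S ⊔ ℵ₀) := lift_le.mpr (Algebra.IsAlgebraic.cardinalMk_le_max S A)
    _ = #(MvPolynomial s R) ⊔ ℵ₀ := by rw [lift_max, lift_aleph0, mk_S]
    _ ≤ lift.{v} #R ⊔ lift.{u} #s ⊔ ℵ₀ := sup_le MvPolynomial.cardinalMk_le_max_lift le_sup_right
    _ = lift.{v} #R ⊔ lift.{u} (Algebra.trdeg R A) ⊔ ℵ₀ := by rw [hs.cardinalMk_eq_trdeg]

end Algebra

theorem continuum_le_trdeg (R : Type u) (K : Type v) [CommRing R] [Countable R]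
    [NontriviallyNormedField K] [CompleteSpace K] [Algebra R K] [FaithfulSMul R K] :
    𝔠 ≤ Algebra.trdeg R K := by
  have continuum_le_mk : 𝔠 ≤ #K := continuum_le_cardinal_of_nontriviallyNormedField K
  have mk_R_lt : #R < 𝔠 := mk_le_aleph0.trans_lt aleph0_lt_continuum
  have continuum_le_max : 𝔠 ≤ lift.{v} #R ⊔ lift.{u} (Algebra.trdeg R K) ⊔ ℵ₀ :=
    (continuum_le_lift.mpr continuum_le_mk).trans lift_mk_le_max_trdeg
  simpa [le_sup_iff, mk_R_lt.not_ge, aleph0_lt_continuum.not_ge] using continuum_le_max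

section Padic

variable {p : ℕ} [Fact p.Prime]

theorem toZMod_eq_iff_norm_sub_lt_one {x y : ℤ_[p]} :
    PadicInt.toZMod x = PadicInt.toZMod y ↔ ‖x - y‖ < 1 := by
  rw [← sub_eq_zero, ← map_sub, ← RingHom.mem_ker, PadicInt.ker_toZMod,
    IsLocalRing.mem_maximalIdeal, PadicInt.mem_nonunits]

theorem isOpen_toZMod_preimage_singleton (a : ZMod p) :
    IsOpen ((PadicInt.toZMod : ℤ_[p] →+* ZMod p) ⁻¹' {a}) := by
  refine Metric.isOpen_iff.mpr fun x hx => ⟨1, one_pos, fun y hy => ?_⟩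
  rw [Metric.mem_ball, dist_eq_norm, ← toZMod_eq_iff_norm_sub_lt_one] at hy
  exact hy.trans hx

end Padic

theorem stmt_8_general (p : ℕ) [Fact p.Prime] {ι : Type u} (hι : #ι ≤ 𝔠) (a : ι → ZMod p) :
    ∃ x : ι → ℤ_[p],
      AlgebraicIndependent ℚ (fun i => (x i : ℚ_[p])) ∧ ∀ i, PadicInt.toZMod (x i) = a i := by
  let residueDisc (i : ι) : Set ℚ_[p] := (↑) '' ((PadicInt.toZMod : ℤ_[p] →+* ZMod p) ⁻¹' {a i})
  have isOpen_residueDisc (i : ι) : IsOpen (residueDisc i) :=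
    PadicInt.isOpenEmbedding_coe.isOpenMap _ (isOpen_toZMod_preimage_singleton (a i))
  have residueDisc_nonempty (i : ι) : (residueDisc i).Nonempty :=
    ((Set.singleton_nonempty (a i)).preimage (ZMod.ringHom_surjective PadicInt.toZMod)).image _
  have mk_le_trdeg : lift.{0} #ι ≤ lift.{u} (Algebra.trdeg ℚ ℚ_[p]) :=
    calc lift.{0} #ι ≤ lift.{u} 𝔠 := by simpa using hι
      _ ≤ _ := lift_le.mpr (continuum_le_trdeg ℚ ℚ_[p])
  obtain ⟨y, hy⟩ := exists_algebraicIndependent_of_lift_mk_le_trdeg mk_le_trdeg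
  obtain ⟨z, hz, hz_mem⟩ := exists_algebraicIndependent_mem_of_isOpen
    (Padic.denseRange_ratCast p) hy isOpen_residueDisc residueDisc_nonempty
  choose x hxa hxz using hz_mem
  exact ⟨x, by simpa only [hxz] using hz, hxa⟩

/-- For every prime `p`, every `d ≥ 0` and every tuple `(a_1, …, a_d)` of elements of `𝔽_p`,
there exist `p`-adic integers `x_1, …, x_d` that are algebraically independent over `ℚ`
(as elements of `ℚ_p`) and satisfy `x_i ≡ a_i (mod p)` for all `i`. -/
theorem stmt_8 (p : ℕ) [Fact p.Prime] (d : ℕ) (a : Fin d → ZMod p) :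
    ∃ x : Fin d → ℤ_[p],
      AlgebraicIndependent ℚ (fun i : Fin d => ((x i : ℚ_[p]))) ∧
        ∀ i : Fin d, PadicInt.toZMod (x i) = a i :=
  stmt_8_general p (mk_le_aleph0.trans aleph0_le_continuum) a
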